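/- arXiv:2311.06959 — 2 statements merged into one kernel-verified Lean document; each statement's English description precedes it below -/
import Mathlib

section
/- Let q1, a, q2 be points of the Euclidean plane EuclideanSpace ℝ (Fin 2) and let b_min ≥ 0. If ‖q2 − q1‖² − 2⟨a − q1, 2q2 − a − q1⟩ ≤ −b_min², then ‖q2 − q1‖ ≥ b_min. -/
open RealInnerProductSpace

/-- Soundness of the convexified minimum-separation constraint C̃5: any point
feasible for C̃5 is feasible for the original safety constraint C5. -/
theorem stmt_6 (q1 a q2 : EuclideanSpace ℝ (Fin 2)) (bmin : ℝ) (hb : 0 ≤ bmin)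
    (h : ‖q2 - q1‖ ^ 2 - 2 * ⟪a - q1, (2 : ℝ) • q2 - a - q1⟫ ≤ -bmin ^ 2) :
    ‖q2 - q1‖ ≥ bmin := by
  have e : (2 : ℝ) • q2 - a - q1 = (2 : ℝ) • (q2 - q1) - (a - q1) := by
    module
  rw [e, inner_sub_right, inner_smul_right, real_inner_self_eq_norm_sq] at h
  have k := norm_sub_sq_real (a - q1) (q2 - q1)
  have p := sq_nonneg ‖(a - q1) - (q2 - q1)‖
  exact (sq_le_sq₀ hb (norm_nonneg _)).mp (by linarith)
end

section
/- Let t > 0, z1 > 0, λ > 0, x_t ∈ ℝ, and let the master UAV position be q1 = (x_t − t·z1, z1). Then the slant range r1 = ‖q1 − (x_t, 0)‖ equals z1·√(1 + t²), the look-angle sine sin θ1 := (x_t − x1)/r1 equals t/√(1 + t²), and hence r1·sin θ1 = t·z1. Moreover, for any slave position q2 = (x2, z2) with (x_t − x2) − t·z2 ≠ 0, the height of ambiguity h_amb = λ·r1·sin θ1 / b⊥(q2), where b⊥(q2) = |(x_t − x2) − t·z2|/√(t² + 1), equals λ·t·z1·√(t² + 1) / |(x_t − x2) − t·z2|. -/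
/-- Closed form of the height of ambiguity: with the master placement
`q1 = (x_t - t·z1, z1)` looking at the target `(x_t, 0)`, the slant range is
`r1 = z1·√(1 + t²)`, the look-angle sine is `t/√(1 + t²)`, hence
`r1·sin θ1 = t·z1`, and `h_amb = λ·r1·sin θ1 / b⊥(q2)
= λ·t·z1·√(t² + 1) / |(x_t - x2) - t·z2|`. -/
theorem stmt_13 (t z1 lam xt : ℝ) (ht : 0 < t) (hz1 : 0 < z1) (hlam : 0 < lam)
    (q1 pt : EuclideanSpace ℝ (Fin 2))
    (hq1x : q1 0 = xt - t * z1) (hq1z : q1 1 = z1)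
    (hptx : pt 0 = xt) (hptz : pt 1 = 0) :
    ‖q1 - pt‖ = z1 * Real.sqrt (1 + t ^ 2) ∧
    (xt - q1 0) / ‖q1 - pt‖ = t / Real.sqrt (1 + t ^ 2) ∧
    ‖q1 - pt‖ * ((xt - q1 0) / ‖q1 - pt‖) = t * z1 ∧
    (∀ x2 z2 : ℝ, (xt - x2) - t * z2 ≠ 0 →
      lam * (‖q1 - pt‖ * ((xt - q1 0) / ‖q1 - pt‖)) /
          (|(xt - x2) - t * z2| / Real.sqrt (t ^ 2 + 1)) =
        lam * t * z1 * Real.sqrt (t ^ 2 + 1) / |(xt - x2) - t * z2|) := by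
  have hs : 0 < Real.sqrt (1 + t ^ 2) := Real.sqrt_pos.mpr (by positivity)
  have hr : ‖q1 - pt‖ = z1 * Real.sqrt (1 + t ^ 2) := by
    rw [EuclideanSpace.norm_eq, Fin.sum_univ_two]
    simp only [PiLp.sub_apply, hq1x, hq1z, hptx, hptz, Real.norm_eq_abs, sq_abs]
    rw [show (xt - t * z1 - xt) ^ 2 + (z1 - 0) ^ 2 = z1 ^ 2 * (1 + t ^ 2) by ring,
      Real.sqrt_mul (sq_nonneg z1), Real.sqrt_sq hz1.le]
  have hx : xt - q1 0 = t * z1 := by rw [hq1x]; ring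
  have hp : ‖q1 - pt‖ * ((xt - q1 0) / ‖q1 - pt‖) = t * z1 := by
    rw [hx, mul_div_cancel₀]
    rw [hr]
    positivity
  refine ⟨hr, ?_, hp, ?_⟩
  · rw [hx, hr]
    field_simp
  · intro x2 z2 _
    rw [hp, div_div_eq_mul_div]
    ring
end
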